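/- arXiv:1708.01575 — 4 statements merged into one kernel-verified Lean document; each statement's English description precedes it below -/
import Mathlib

section
/- Let m ≥ 1 and let B be an m×m real matrix. Then det(I_m + Bᵀ B) equals the sum, over all k with 0 ≤ k ≤ m and over all pairs (I, J) of subsets of {1,…,m} with |I| = |J| = k, of the squares det(B_{I,J})², where B_{I,J} denotes the k×k submatrix of B with rows indexed by I and columns indexed by J (the term for k = 0 is 1). In particular det(I_m + Bᵀ B) = 1 + Σ_{i,j} b_{ij}² + Σ_{i1<i2, j1<j2} det(B^{i1 i2}_{j1 j2})² + ⋯ + (det B)². -/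
open Matrix BigOperators

/-- The `k × k` minor of a square matrix `B` with rows indexed by the subset `I`
and columns indexed by the subset `J` (both of cardinality `k`),
taken in increasing order; `0` if the cardinalities are wrong. -/
noncomputable def matrixMinor {m : ℕ} (B : Matrix (Fin m) (Fin m) ℝ) (k : ℕ)
    (I J : Finset (Fin m)) : ℝ :=
  if h : I.card = k ∧ J.card = k then
    (B.submatrix (fun i : Fin k => I.orderEmbOfFin h.1 i)
      (fun j : Fin k => J.orderEmbOfFin h.2 j)).det
  else 0

/-!
Expanding `det (1 + M)` by multilinearity in the rows gives the sum of all principal minors of `M`,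
that is `∑ₖ tr (Cₖ M)` with `Cₖ` the `k`-th compound matrix. By the Cauchy–Binet formula `Cₖ` is
multiplicative, so for `M = Bᵀ B` the `k`-th term is `tr ((Cₖ B)ᵀ (Cₖ B))`, the sum of the squares
of the entries of `Cₖ B`. The Cauchy–Binet formula comes from expanding a wedge product of `k`
vectors in the standard basis of the exterior power, where the coordinates are `k × k` minors.
-/

open Set.powersetCard (ofFinEmbEquiv)

section AlternatingMap

variable {R M N n : Type*} [CommRing R] [AddCommGroup M] [Module R M] [AddCommGroup N] [Module R N]
  [Fintype n] [LinearOrder n] {k : ℕ}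

lemma alternatingMap_apply_eq_sum_det_repr_smul (b : Module.Basis n R M) (f : M [⋀^Fin k]→ₗ[R] N)
    (v : Fin k → M) :
    f v = ∑ S, (of fun i j => b.repr (v i) (ofFinEmbEquiv.symm S j)).det •
      f (b ∘ ofFinEmbEquiv.symm S) := by
  have expand := congrArg (exteriorPower.alternatingMapLinearEquiv f)
    ((b.exteriorPower k).sum_repr (exteriorPower.ιMulti R k v)).symm
  simpa only [map_sum, map_smul, exteriorPower.basis_apply, exteriorPower.ιMulti_family,
    exteriorPower.basis_repr_apply, exteriorPower.ιMultiDual_apply_ιMulti,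
    exteriorPower.alternatingMapLinearEquiv_apply_ιMulti, Module.Basis.coord_apply] using expand

theorem alternatingMap_sum_smul_eq_sum_det_smul (f : M [⋀^Fin k]→ₗ[R] N) (A : Matrix (Fin k) n R)
    (v : n → M) :
    f (fun i => ∑ j, A i j • v j) =
      ∑ S, (A.submatrix id (ofFinEmbEquiv.symm S)).det • f (v ∘ ofFinEmbEquiv.symm S) := by
  have combination_basis (j : n) :
      Fintype.linearCombination R v (Pi.basisFun R n j) = v j := by
    rw [Pi.basisFun_apply, Fintype.linearCombination_apply_single, one_smul]
  calc f (fun i => ∑ j, A i j • v j)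
      = f.compLinearMap (Fintype.linearCombination R v) A.row := rfl
    _ = ∑ S, (A.submatrix id (ofFinEmbEquiv.symm S)).det •
          f (fun i => Fintype.linearCombination R v (Pi.basisFun R n (ofFinEmbEquiv.symm S i))) :=
        alternatingMap_apply_eq_sum_det_repr_smul (Pi.basisFun R n) _ _
    _ = ∑ S, (A.submatrix id (ofFinEmbEquiv.symm S)).det • f (v ∘ ofFinEmbEquiv.symm S) := by
        simp only [combination_basis, Function.comp_def]

end AlternatingMap

section Compound

variable {R l m n : Type*} [CommRing R] [LinearOrder l] [LinearOrder m] [LinearOrder n]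

/-- The `k`-th compound matrix of `A`: the matrix of all `k × k` minors of `A`. Its rows and columns
are indexed by the `k`-element sets of rows and columns of `A`, each enumerated increasingly. -/
noncomputable def compoundMatrix (k : ℕ) (A : Matrix m n R) :
    Matrix (Set.powersetCard m k) (Set.powersetCard n k) R :=
  of fun I J => (A.submatrix (ofFinEmbEquiv.symm I) (ofFinEmbEquiv.symm J)).det

lemma compoundMatrix_apply (k : ℕ) (A : Matrix m n R) (I : Set.powersetCard m k)
    (J : Set.powersetCard n k) :
    compoundMatrix k A I J = (A.submatrix (ofFinEmbEquiv.symm I) (ofFinEmbEquiv.symm J)).det :=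
  rfl

lemma compoundMatrix_transpose (k : ℕ) (A : Matrix m n R) :
    compoundMatrix k Aᵀ = (compoundMatrix k A)ᵀ := by
  ext I J
  simp only [compoundMatrix_apply, transpose_apply, ← transpose_submatrix, det_transpose]

/-- The **Cauchy–Binet formula**. -/
theorem compoundMatrix_mul [Fintype m] (k : ℕ) (A : Matrix l m R) (B : Matrix m n R) :
    compoundMatrix k (A * B) = compoundMatrix k A * compoundMatrix k B := by
  ext I J
  calc compoundMatrix k (A * B) I J
      = detRowAlternating (fun i => ∑ j, A (ofFinEmbEquiv.symm I i) j •
          (B.submatrix id (ofFinEmbEquiv.symm J)).row j) := by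
        rw [compoundMatrix_apply]
        congr 1
        ext i j
        simp [mul_apply]
    _ = ∑ S, compoundMatrix k A I S * compoundMatrix k B S J :=
        alternatingMap_sum_smul_eq_sum_det_smul detRowAlternating
          (A.submatrix (ofFinEmbEquiv.symm I) id) (B.submatrix id (ofFinEmbEquiv.symm J)).row

lemma det_submatrix_val_eq_compoundMatrix_apply_self {k : ℕ} (A : Matrix n n R)
    (S : Set.powersetCard n k) :
    (A.submatrix (Subtype.val : S.val → n) Subtype.val).det = compoundMatrix k A S S :=
  (det_submatrix_equiv_self (S.val.orderIsoOfFin S.prop).toEquiv _).symm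

end Compound

lemma det_one_add_eq_sum_det_submatrix {R n : Type*} [CommRing R] [Fintype n] [DecidableEq n]
    (A : Matrix n n R) :
    (1 + A).det = ∑ S : Finset n, (A.submatrix (Subtype.val : S → n) Subtype.val).det := by
  calc (1 + A).det = (A + 1).det := by rw [add_comm]
    _ = ∑ S : Finset n, (of (S.piecewise A.row (1 : Matrix n n R).row)).det :=
      detRowAlternating.map_add_univ A.row (1 : Matrix n n R).row
    _ = ∑ S : Finset n, (A.submatrix (Subtype.val : S → n) Subtype.val).det :=
      Finset.sum_congr rfl fun S _ => det_piecewise_one_eq_submatrix_det A S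

lemma sum_powersetCard_univ_eq_sum_coe {n M : Type*} [Fintype n] [AddCommMonoid M] (k : ℕ)
    (f : Finset n → M) :
    ∑ S ∈ Finset.univ.powersetCard k, f S = ∑ S : Set.powersetCard n k, f S :=
  Finset.sum_subtype _ (by simp) f

section DetOneAdd

variable {R m n : Type*} [CommRing R] [Fintype m] [LinearOrder m] [Fintype n] [LinearOrder n]

theorem det_one_add_eq_sum_trace_compoundMatrix (A : Matrix n n R) :
    (1 + A).det = ∑ k ∈ Finset.range (Fintype.card n + 1), (compoundMatrix k A).trace := by
  rw [det_one_add_eq_sum_det_submatrix, ← Finset.powerset_univ, Finset.sum_powerset,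
    Finset.card_univ]
  refine Finset.sum_congr rfl fun k _ => ?_
  rw [sum_powersetCard_univ_eq_sum_coe]
  exact Finset.sum_congr rfl fun S _ => det_submatrix_val_eq_compoundMatrix_apply_self A S

theorem det_one_add_mul_eq_sum_trace_compoundMatrix_mul (A : Matrix n m R) (B : Matrix m n R) :
    (1 + A * B).det = ∑ k ∈ Finset.range (Fintype.card n + 1),
      (compoundMatrix k A * compoundMatrix k B).trace := by
  simp only [det_one_add_eq_sum_trace_compoundMatrix, compoundMatrix_mul]

theorem det_one_add_transpose_mul_eq_sum_sq_minors_general (B : Matrix m n R) :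
    (1 + Bᵀ * B).det = ∑ k ∈ Finset.range (Fintype.card n + 1),
      ∑ I : Set.powersetCard m k, ∑ J : Set.powersetCard n k, compoundMatrix k B I J ^ 2 := by
  rw [det_one_add_mul_eq_sum_trace_compoundMatrix_mul]
  refine Finset.sum_congr rfl fun k _ => ?_
  rw [compoundMatrix_transpose, trace_mul_comm]
  simp only [trace, diag_apply, mul_apply, transpose_apply, sq]

end DetOneAdd

lemma matrixMinor_eq_compoundMatrix {m k : ℕ} (B : Matrix (Fin m) (Fin m) ℝ)
    (I J : Set.powersetCard (Fin m) k) :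
    matrixMinor B k I J = compoundMatrix k B I J :=
  dif_pos ⟨I.prop, J.prop⟩

/-- `det (I + Bᵀ B)` is the sum of the squares of all minors of `B`
(of all sizes `0 ≤ k ≤ m`; the `k = 0` term is `1`). -/
theorem det_one_add_transpose_mul_eq_sum_sq_minors
    (m : ℕ) (hm : 1 ≤ m) (B : Matrix (Fin m) (Fin m) ℝ) :
    (1 + Bᵀ * B).det =
      ∑ k ∈ Finset.range (m + 1),
        ∑ I ∈ Finset.univ.powersetCard k,
          ∑ J ∈ Finset.univ.powersetCard k,
            (matrixMinor B k I J) ^ 2 := by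
  simpa only [Fintype.card_fin, sum_powersetCard_univ_eq_sum_coe, matrixMinor_eq_compoundMatrix]
    using det_one_add_transpose_mul_eq_sum_sq_minors_general B
end

section
/- Let m ≥ 1 and let d₁, …, d_{2m} be nonnegative real numbers. Then √(∏_{i=1}^{2m} (1 + d_i²)) ≥ Σ_{k=0}^{m} C(m,k) · C(2m,2k)⁻¹ · e_{2k}(d₁, …, d_{2m}), where e_{2k} denotes the elementary symmetric polynomial of degree 2k in 2m variables (with e₀ = 1) and C(a,b) denotes the binomial coefficient. -/
open BigOperators

/-!
Average over all permutations of the indices, that is, over all ways to group them into ordered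
pairs. For a fixed pairing, `|1 + a * b| ≤ √((1 + a ^ 2) * (1 + b ^ 2))` bounds the product of
`1 + a * b` over the pairs `(a, b)` by `√(∏ (1 + dᵢ ^ 2))`, which does not depend on the pairing.
Expanding the product gives one monomial for each set of `k` pairs, and, permutations acting
transitively on the sets of `2 * k` indices, each of these `m.choose k` monomials averages to the
mean of all squarefree monomials of degree `2 * k`.
-/

open Finset MulAction

open scoped Pointwise

section Averages

variable {G X M : Type*} [AddCommMonoid M] [Module ℚ≥0 M]

lemma expect_smul_eq_expect [Group G] [Fintype G] [MulAction G X] [Fintype X] [IsPretransitive G X]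
    (F : X → M) (x : X) : 𝔼 g : G, F (g • x) = 𝔼 y, F y := by
  have orbit_average_const (y : X) : 𝔼 g : G, F (g • y) = 𝔼 g : G, F (g • x) := by
    obtain ⟨h, rfl⟩ := exists_smul_eq G x y
    exact Fintype.expect_equiv (Equiv.mulRight h) _ _ fun g ↦ by
      rw [Equiv.coe_mulRight, mul_smul]
  have : Nonempty X := ⟨x⟩
  calc
    𝔼 g : G, F (g • x) = 𝔼 y : X, 𝔼 g : G, F (g • y) := by
      simp only [orbit_average_const, Fintype.expect_const]
    _ = 𝔼 g : G, 𝔼 y : X, F (g • y) := expect_comm _ _ _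
    _ = 𝔼 _g : G, 𝔼 y, F y :=
      expect_congr rfl fun g _ ↦ Fintype.expect_equiv (toPerm g) _ _ fun _ ↦ rfl
    _ = 𝔼 y, F y := Fintype.expect_const _

lemma expect_perm_smul_finset {α : Type*} [Fintype α] [DecidableEq α] (F : Finset α → M)
    (s : Finset α) :
    𝔼 σ : Equiv.Perm α, F (σ • s) = 𝔼 t ∈ univ.powersetCard #s, F t := by
  have : IsPretransitive (Equiv.Perm α) (Set.powersetCard α #s) := Set.powersetCard.isPretransitive
  calc
    𝔼 σ : Equiv.Perm α, F (σ • s) = 𝔼 t : Set.powersetCard α #s, F t :=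
      expect_smul_eq_expect (fun t : Set.powersetCard α #s ↦ F t) (Set.powersetCard.ofCard rfl)
    _ = 𝔼 t ∈ univ.powersetCard #s, F t := by
      refine expect_bij (fun t _ ↦ t) ?_ ?_ ?_ ?_ <;> simp

end Averages

section Blocks

variable {ι κ ρ R : Type*} [Fintype ι] [DecidableEq ι] [Fintype ρ]
  [CommSemiring R] [Module ℚ≥0 R]

lemma expect_perm_prod_prod (e : κ × ρ ↪ ι) (d : ι → R) (S : Finset κ) :
    𝔼 σ : Equiv.Perm ι, ∏ j ∈ S, ∏ r, d (σ (e (j, r))) =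
      𝔼 t ∈ univ.powersetCard (#S * Fintype.card ρ), ∏ i ∈ t, d i := by
  let T : Finset ι := (S ×ˢ univ).map e
  have card_T : #T = #S * Fintype.card ρ := by simp [T]
  rw [← card_T, ← expect_perm_smul_finset]
  refine expect_congr rfl fun σ _ ↦ ?_
  rw [smul_finset_def, prod_image (MulAction.injective σ).injOn, prod_map, prod_product]
  rfl

lemma expect_perm_prod_one_add_prod [Fintype κ] (e : κ × ρ ↪ ι) (d : ι → R) :
    𝔼 σ : Equiv.Perm ι, ∏ j, (1 + ∏ r, d (σ (e (j, r)))) =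
      ∑ k ∈ range (Fintype.card κ + 1), (Fintype.card κ).choose k •
        𝔼 t ∈ univ.powersetCard (k * Fintype.card ρ), ∏ i ∈ t, d i := by
  simp only [prod_one_add, expect_sum_comm, expect_perm_prod_prod]
  exact sum_powerset_apply_card
    (fun k ↦ 𝔼 t ∈ univ.powersetCard (k * Fintype.card ρ), ∏ i ∈ t, d i)

end Blocks

lemma sq_one_add_mul_le {R : Type*} [CommRing R] [LinearOrder R] [IsStrictOrderedRing R] (a b : R) :
    (1 + a * b) ^ 2 ≤ (1 + a ^ 2) * (1 + b ^ 2) := by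
  linarith [sq_nonneg (a - b)]

lemma prod_one_add_mul_le_sqrt {ι κ : Type*} [Fintype ι] [Fintype κ] (e : κ × Fin 2 ≃ ι)
    (d : ι → ℝ) : ∏ j, (1 + d (e (j, 0)) * d (e (j, 1))) ≤ √(∏ i, (1 + d i ^ 2)) := by
  apply Real.le_sqrt_of_sq_le
  calc
    (∏ j, (1 + d (e (j, 0)) * d (e (j, 1)))) ^ 2 = ∏ j, (1 + d (e (j, 0)) * d (e (j, 1))) ^ 2 :=
      (prod_pow _ _ _).symm
    _ ≤ ∏ j, (1 + d (e (j, 0)) ^ 2) * (1 + d (e (j, 1)) ^ 2) :=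
      prod_le_prod (fun _ _ ↦ sq_nonneg _) fun _ _ ↦ sq_one_add_mul_le _ _
    _ = ∏ i, (1 + d i ^ 2) := by
      simp only [← e.prod_comp, Fintype.prod_prod_type, Fin.prod_univ_two]

theorem sqrt_prod_one_add_sq_ge_sum_esymm_general {ι : Type*} [Fintype ι] {m : ℕ}
    (hι : Fintype.card ι = 2 * m) (d : ι → ℝ) :
    Real.sqrt (∏ i, (1 + d i ^ 2)) ≥
      ∑ k ∈ Finset.range (m + 1),
        (m.choose k : ℝ) * ((2 * m).choose (2 * k) : ℝ)⁻¹ *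
          ∑ t ∈ Finset.univ.powersetCard (2 * k), ∏ i ∈ t, d i := by
  classical
  let e : Fin m × Fin 2 ≃ ι := Fintype.equivOfCardEq (by simp [hι, mul_comm])
  calc
    √(∏ i, (1 + d i ^ 2)) ≥
        𝔼 σ : Equiv.Perm ι, ∏ j, (1 + d (σ (e (j, 0))) * d (σ (e (j, 1)))) :=
      expect_le univ_nonempty fun σ _ ↦ prod_one_add_mul_le_sqrt (e.trans σ) d
    _ = ∑ k ∈ range (m + 1), m.choose k • 𝔼 t ∈ univ.powersetCard (k * 2), ∏ i ∈ t, d i := by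
      simpa only [Fintype.card_fin, Fin.prod_univ_two, Equiv.coe_toEmbedding] using
        expect_perm_prod_one_add_prod e.toEmbedding d
    _ = _ := sum_congr rfl fun k _ ↦ by
      rw [expect_eq_sum_div_card, card_powersetCard, card_univ, hι, nsmul_eq_mul, mul_comm k 2,
        div_eq_inv_mul, mul_assoc]

/-- For nonnegative reals `d₁, …, d_{2m}`,
`√(∏ (1 + dᵢ²)) ≥ ∑_{k=0}^{m} C(m,k) C(2m,2k)⁻¹ e_{2k}(d)`,
where `e_{2k}` is the elementary symmetric polynomial of degree `2k`. -/
theorem sqrt_prod_one_add_sq_ge_sum_esymm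
    (m : ℕ) (hm : 1 ≤ m) (d : Fin (2 * m) → ℝ) (hd : ∀ i, 0 ≤ d i) :
    Real.sqrt (∏ i, (1 + d i ^ 2)) ≥
      ∑ k ∈ Finset.range (m + 1),
        (m.choose k : ℝ) * ((2 * m).choose (2 * k) : ℝ)⁻¹ *
          ∑ t ∈ Finset.univ.powersetCard (2 * k), ∏ i ∈ t, d i :=
  sqrt_prod_one_add_sq_ge_sum_esymm_general (Fintype.card_fin _) d
end

section
/- Let n ≥ 1 and let A be a 2n×2n real matrix. For 0 ≤ k ≤ 2n let σ_k(A) denote the sum of all principal k×k minors of A (so σ₀(A) = 1 and σ_k(A) is, up to sign, the coefficient of the characteristic polynomial of A). Then √det(I_{2n} + Aᵀ A) ≥ Σ_{k=0}^{n} C(n,k) · C(2n,2k)⁻¹ · |σ_{2k}(A)|. -/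
/-!
An orthogonal change of basis `V` that diagonalizes `AᵀA` preserves both sides, so the columns of
`A` may be assumed pairwise orthogonal, with norms `s₁, …, s₂ₙ`. Then `det (1 + AᵀA) = ∏ (1 + sⱼ²)`,
and Hadamard's inequality applied to each principal minor gives `|σ_k(A)| ≤ e_k(s)`. For every
partition of the indices into pairs `{a, b}`, Cauchy–Schwarz on each pair gives
`∏ (1 + s_a s_b) ≤ ∏ √(1 + sⱼ²)`. Averaging the left-hand side over all pairings gives
`∑ C(n,k) C(2n,2k)⁻¹ e_{2k}(s)`, since each pairing has `C(n,k)` unions of `k` pairs, each of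
which is a uniformly distributed `2k`-set.
-/

open Matrix BigOperators

/-- The sum of all principal `k × k` minors of a square real matrix `A`
(the `k`-th elementary symmetric function of `A`; `σ₀ = 1`). -/
noncomputable def sigmaMinors {N : ℕ} (A : Matrix (Fin N) (Fin N) ℝ) (k : ℕ) : ℝ :=
  ∑ I ∈ Finset.univ.powersetCard k,
    if h : I.card = k then
      (A.submatrix (fun i : Fin k => I.orderEmbOfFin h i)
        (fun j : Fin k => I.orderEmbOfFin h j)).det
    else 0

open scoped Nat

section Averaging

theorem card_nsmul_sum_smul {G X M : Type*} [Group G] [Fintype G] [MulAction G X] [Fintype X]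
    [MulAction.IsPretransitive G X] [AddCommMonoid M] (f : X → M) (x : X) :
    Fintype.card X • ∑ g : G, f (g • x) = Fintype.card G • ∑ y, f y := by
  have sum_eq (y : X) : ∑ g : G, f (g • y) = ∑ g : G, f (g • x) := by
    obtain ⟨h, rfl⟩ := MulAction.exists_smul_eq G x y
    simpa only [Equiv.coe_mulRight, mul_smul] using
      Equiv.sum_comp (Equiv.mulRight h) fun g => f (g • x)
  calc Fintype.card X • ∑ g : G, f (g • x) = ∑ y : X, ∑ g : G, f (g • y) := by
        simp [sum_eq]
    _ = ∑ g : G, ∑ y : X, f (g • y) := Finset.sum_comm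
    _ = ∑ _g : G, ∑ y, f y :=
        Finset.sum_congr rfl fun g _ => Equiv.sum_comp (MulAction.toPerm g) f
    _ = Fintype.card G • ∑ y, f y := by simp

variable {ι κ : Type*} [Fintype ι] [Fintype κ]

theorem choose_card_mul_sum_perm_prod [DecidableEq ι] {R : Type*} [CommSemiring R]
    (s : ι → R) (t : Finset ι) :
    ((Fintype.card ι).choose t.card : R) * ∑ p : Equiv.Perm ι, ∏ i ∈ t, s (p i) =
      (Fintype.card ι)! * (Finset.univ.val.map s).esymm t.card := by
  have := Set.powersetCard.isPretransitive (α := ι) (n := t.card)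
  have average := card_nsmul_sum_smul (G := Equiv.Perm ι)
    (fun u : Set.powersetCard ι t.card => ∏ i ∈ (u : Finset ι), s i) ⟨t, rfl⟩
  have card_eq : Fintype.card (Set.powersetCard ι t.card) = (Fintype.card ι).choose t.card := by
    rw [← Nat.card_eq_fintype_card, Set.powersetCard.card, Nat.card_eq_fintype_card]
  rw [card_eq, Fintype.card_perm, nsmul_eq_mul, nsmul_eq_mul] at average
  rw [Finset.esymm_map_val, Finset.sum_subtype (p := (· ∈ Set.powersetCard ι t.card)) _ (by simp)]
  simpa [Finset.smul_finset_def, Finset.prod_image] using average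

theorem sum_perm_prod_one_add_mul [DecidableEq ι] {K : Type*} [Field K] [CharZero K]
    (e : κ × Fin 2 ≃ ι) (s : ι → K) :
    ∑ p : Equiv.Perm ι, ∏ i, (1 + s (p (e (i, 0))) * s (p (e (i, 1)))) =
      (Fintype.card ι)! * ∑ k ∈ Finset.range (Fintype.card κ + 1),
        ((Fintype.card κ).choose k : K) * ((Fintype.card ι).choose (2 * k) : K)⁻¹ *
          (Finset.univ.val.map s).esymm (2 * k) := by
  have sum_pairs (T : Finset κ) :
      ∑ p : Equiv.Perm ι, ∏ i ∈ T, s (p (e (i, 0))) * s (p (e (i, 1))) =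
        (Fintype.card ι)! * (((Fintype.card ι).choose (2 * T.card) : K)⁻¹ *
          (Finset.univ.val.map s).esymm (2 * T.card)) := by
    let U : Finset ι := (T ×ˢ Finset.univ).map e.toEmbedding
    have card_U : U.card = 2 * T.card := by simp [U, mul_comm]
    have choose_ne_zero : ((Fintype.card ι).choose (2 * T.card) : K) ≠ 0 :=
      Nat.cast_ne_zero.2 (Nat.choose_pos (card_U ▸ U.card_le_univ)).ne'
    have prod_U (p : Equiv.Perm ι) :
        ∏ i ∈ T, s (p (e (i, 0))) * s (p (e (i, 1))) = ∏ x ∈ U, s (p x) := by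
      simp [U, Finset.prod_map, Finset.prod_product]
    have average := choose_card_mul_sum_perm_prod s U
    rw [card_U] at average
    simp_rw [prod_U]
    rw [mul_left_comm, ← average, inv_mul_cancel_left₀ choose_ne_zero]
  simp_rw [Finset.prod_one_add]
  rw [Finset.sum_comm]
  simp_rw [sum_pairs]
  rw [← Finset.mul_sum, Finset.sum_powerset_apply_card (fun k =>
    ((Fintype.card ι).choose (2 * k) : K)⁻¹ * (Finset.univ.val.map s).esymm (2 * k))]
  simp only [Finset.card_univ, nsmul_eq_mul, mul_assoc]

theorem abs_one_add_mul_le_sqrt_mul_sqrt (a b : ℝ) :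
    |1 + a * b| ≤ √(1 + a ^ 2) * √(1 + b ^ 2) := by
  rw [← Real.sqrt_mul (by positivity)]
  exact Real.abs_le_sqrt (by linarith [sq_nonneg (a - b)])

theorem prod_one_add_mul_le_prod_sqrt (e : κ × Fin 2 ≃ ι) (s : ι → ℝ) :
    ∏ i, (1 + s (e (i, 0)) * s (e (i, 1))) ≤ ∏ j, √(1 + s j ^ 2) :=
  calc ∏ i, (1 + s (e (i, 0)) * s (e (i, 1)))
      ≤ ∏ i, |1 + s (e (i, 0)) * s (e (i, 1))| :=
        (le_abs_self _).trans_eq (Finset.abs_prod _ _)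
    _ ≤ ∏ i, √(1 + s (e (i, 0)) ^ 2) * √(1 + s (e (i, 1)) ^ 2) :=
        Finset.prod_le_prod (fun _ _ => abs_nonneg _) fun _ _ =>
          abs_one_add_mul_le_sqrt_mul_sqrt _ _
    _ = ∏ j, √(1 + s j ^ 2) := by
        simp [← e.prod_comp, Fintype.prod_prod_type]

theorem sum_choose_mul_inv_choose_mul_esymm_le_prod_sqrt {n : ℕ}
    (hn : Fintype.card ι = 2 * n) (s : ι → ℝ) :
    ∑ k ∈ Finset.range (n + 1), (n.choose k : ℝ) * ((2 * n).choose (2 * k) : ℝ)⁻¹ *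
      (Finset.univ.val.map s).esymm (2 * k) ≤ ∏ j, √(1 + s j ^ 2) := by
  classical
  let e : Fin n × Fin 2 ≃ ι := Fintype.equivOfCardEq (by simp [hn, mul_comm])
  have average := sum_perm_prod_one_add_mul e s
  rw [hn, Fintype.card_fin] at average
  refine le_of_mul_le_mul_left ?_ (Nat.cast_pos.2 (2 * n).factorial_pos)
  calc _ = ∑ p : Equiv.Perm ι, ∏ i, (1 + s (p (e (i, 0))) * s (p (e (i, 1)))) := average.symm
    _ ≤ ∑ _p : Equiv.Perm ι, ∏ j, √(1 + s j ^ 2) :=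
        Finset.sum_le_sum fun p _ => prod_one_add_mul_le_prod_sqrt (e.trans p) s
    _ = ((2 * n)! : ℝ) * ∏ j, √(1 + s j ^ 2) := by
        simp [Fintype.card_perm, hn]

end Averaging

section Hadamard

variable {ι κ m n : Type*} [Fintype ι] [DecidableEq ι] [Fintype κ] [Fintype m]

theorem abs_det_le_prod_norm_col (M : Matrix ι ι ℝ) :
    |M.det| ≤ ∏ j, ‖WithLp.toLp 2 (M.col j)‖ := by
  let e := Fintype.equivFin ι
  let b := (EuclideanSpace.basisFun ι ℝ).reindex e
  have : Fact (Module.finrank ℝ (EuclideanSpace ℝ ι) = Fintype.card ι) := ⟨by simp⟩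
  have volume_le := b.toBasis.orientation.abs_volumeForm_apply_le
    fun j => WithLp.toLp 2 (M.col (e.symm j))
  rw [Orientation.volumeForm_robust _ b rfl, Module.Basis.det_apply] at volume_le
  rw [← det_submatrix_equiv_self e.symm M, ← e.symm.prod_comp]
  exact volume_le

theorem norm_toLp_comp_le_of_injective {E : Type*} [SeminormedAddCommGroup E] {f : κ → m}
    (hf : f.Injective) (v : m → E) :
    ‖WithLp.toLp 2 (v ∘ f)‖ ≤ ‖WithLp.toLp 2 v‖ := by
  rw [PiLp.norm_eq_of_L2, PiLp.norm_eq_of_L2]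
  refine Real.sqrt_le_sqrt ?_
  calc ∑ i, ‖v (f i)‖ ^ 2 = ∑ x ∈ Finset.univ.map ⟨f, hf⟩, ‖v x‖ ^ 2 := by simp
    _ ≤ ∑ x, ‖v x‖ ^ 2 :=
      Finset.sum_le_sum_of_subset_of_nonneg (Finset.subset_univ _) fun _ _ _ => sq_nonneg _

theorem abs_det_submatrix_le_prod_norm_col (M : Matrix m n ℝ) {f : ι → m} (hf : f.Injective)
    (g : ι → n) : |(M.submatrix f g).det| ≤ ∏ j, ‖WithLp.toLp 2 (M.col (g j))‖ :=
  (abs_det_le_prod_norm_col _).trans <| Finset.prod_le_prod (fun _ _ => norm_nonneg _) fun j _ =>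
    norm_toLp_comp_le_of_injective hf (M.col (g j))

end Hadamard

section SigmaMinors

variable {N : ℕ}

theorem sigmaMinors_eq_sum_det_submatrix_val (A : Matrix (Fin N) (Fin N) ℝ) (k : ℕ) :
    sigmaMinors A k = ∑ I ∈ Finset.univ.powersetCard k,
      (A.submatrix (Subtype.val : I → Fin N) (Subtype.val : I → Fin N)).det := by
  refine Finset.sum_congr rfl fun I hI => ?_
  have card_I : I.card = k := (Finset.mem_powersetCard.1 hI).2
  rw [dif_pos card_I, ← det_submatrix_equiv_self (I.orderIsoOfFin card_I).toEquiv]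
  rfl

theorem sigmaMinors_mul_comm (A B : Matrix (Fin N) (Fin N) ℝ) (k : ℕ) :
    sigmaMinors (A * B) k = sigmaMinors (B * A) k := by
  simp only [sigmaMinors_eq_sum_det_submatrix_val, ← coeff_det_one_add_X_smul_eq_sum_minors,
    Matrix.map_mul]
  rw [← Matrix.smul_mul, det_one_add_mul_comm, Matrix.mul_smul]

theorem abs_sigmaMinors_le_esymm_norm_col (A : Matrix (Fin N) (Fin N) ℝ) (k : ℕ) :
    |sigmaMinors A k| ≤
      (Finset.univ.val.map fun j => ‖WithLp.toLp 2 (A.col j)‖).esymm k := by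
  rw [sigmaMinors_eq_sum_det_submatrix_val, Finset.esymm_map_val]
  refine (Finset.abs_sum_le_sum_abs _ _).trans (Finset.sum_le_sum fun I _ => ?_)
  rw [← Finset.prod_coe_sort]
  exact abs_det_submatrix_le_prod_norm_col A Subtype.val_injective _

end SigmaMinors

section OrthogonalColumns

variable {m n : Type*} [Fintype m] [Fintype n] [DecidableEq n]

theorem transpose_mul_self_orthogonal_conj {R : Type*} [CommRing R] {V : Matrix n n R}
    (hV : V ∈ orthogonalGroup n R) (A : Matrix n n R) :
    (Vᵀ * A * V)ᵀ * (Vᵀ * A * V) = Vᵀ * (Aᵀ * A) * V :=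
  calc (Vᵀ * A * V)ᵀ * (Vᵀ * A * V) = Vᵀ * (Aᵀ * (V * Vᵀ) * A) * V := by simp [Matrix.mul_assoc]
    _ = Vᵀ * (Aᵀ * A) * V := by rw [(mem_orthogonalGroup_iff n R).1 hV, Matrix.mul_one]

theorem exists_orthogonal_isDiag_transpose_mul_self (A : Matrix n n ℝ) :
    ∃ V ∈ orthogonalGroup n ℝ, ((Vᵀ * A * V)ᵀ * (Vᵀ * A * V)).IsDiag := by
  have hermitian : (Aᵀ * A).IsHermitian := by simpa using isHermitian_conjTranspose_mul_self A
  let V : Matrix n n ℝ := hermitian.eigenvectorUnitary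
  have diagonalize : Vᵀ * (Aᵀ * A) * V = diagonal hermitian.eigenvalues := by
    simpa [Unitary.conjStarAlgAut_apply, star_eq_conjTranspose] using
      hermitian.conjStarAlgAut_star_eigenvectorUnitary
  refine ⟨V, hermitian.eigenvectorUnitary.2, ?_⟩
  rw [transpose_mul_self_orthogonal_conj hermitian.eigenvectorUnitary.2, diagonalize]
  exact isDiag_diagonal _

theorem det_one_add_transpose_mul_self_of_isDiag {B : Matrix m n ℝ} (hB : (Bᵀ * B).IsDiag) :
    (1 + Bᵀ * B).det = ∏ j, (1 + ‖WithLp.toLp 2 (B.col j)‖ ^ 2) := by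
  rw [← hB.diagonal_diag, ← diagonal_one, diagonal_add, det_diagonal]
  simp [EuclideanSpace.norm_sq_eq, mul_apply, ← sq]

end OrthogonalColumns

/-- For a `2n × 2n` real matrix `A`,
`√det(I + Aᵀ A) ≥ ∑_{k=0}^{n} C(n,k) C(2n,2k)⁻¹ |σ_{2k}(A)|`. -/
theorem sqrt_det_one_add_ge_sum_abs_sigma
    (n : ℕ) (hn : 1 ≤ n) (A : Matrix (Fin (2 * n)) (Fin (2 * n)) ℝ) :
    Real.sqrt (1 + Aᵀ * A).det ≥
      ∑ k ∈ Finset.range (n + 1),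
        (n.choose k : ℝ) * ((2 * n).choose (2 * k) : ℝ)⁻¹ *
          |sigmaMinors A (2 * k)| := by
  obtain ⟨V, hV, isDiag⟩ := exists_orthogonal_isDiag_transpose_mul_self A
  have mul_transpose : V * Vᵀ = 1 := (mem_orthogonalGroup_iff _ ℝ).1 hV
  set B := Vᵀ * A * V with hB
  have sigma_eq (k : ℕ) : sigmaMinors A k = sigmaMinors B k := by
    rw [hB, sigmaMinors_mul_comm, ← Matrix.mul_assoc, mul_transpose, Matrix.one_mul]
  have det_eq : (1 + Bᵀ * B).det = (1 + Aᵀ * A).det := by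
    rw [transpose_mul_self_orthogonal_conj hV, det_one_add_mul_comm, ← Matrix.mul_assoc,
      mul_transpose, Matrix.one_mul]
  let s j := ‖WithLp.toLp 2 (B.col j)‖
  calc √(1 + Aᵀ * A).det = ∏ j, √(1 + s j ^ 2) := by
        rw [← det_eq, det_one_add_transpose_mul_self_of_isDiag isDiag,
          Real.sqrt_prod _ fun j _ => by positivity]
    _ ≥ ∑ k ∈ Finset.range (n + 1), (n.choose k : ℝ) * ((2 * n).choose (2 * k) : ℝ)⁻¹ *
          (Finset.univ.val.map s).esymm (2 * k) :=
        sum_choose_mul_inv_choose_mul_esymm_le_prod_sqrt (Fintype.card_fin _) s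
    _ ≥ ∑ k ∈ Finset.range (n + 1), (n.choose k : ℝ) * ((2 * n).choose (2 * k) : ℝ)⁻¹ *
          |sigmaMinors A (2 * k)| := by
        simp only [sigma_eq]
        gcongr
        exact abs_sigmaMinors_le_esymm_norm_col B _
end

section
/- For every natural number n ≥ 1, one has 4ⁿ / C(2n, n) < √(2πn), where C(2n, n) is the central binomial coefficient. -/
/-!
The sequence `n * (C(2n, n) / 4 ^ n) ^ 2` is monotone, because the square of the ratio
`C(2n + 2, n + 1) / C(2n, n) = 2 * (2 * n + 1) / (n + 1)` is at least `16 * n / (n + 1)`. It equals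
`1 / 4` at `n = 1`, so `4 ^ n / C(2n, n) ≤ √(4 * n)` for `n ≥ 1`, and `4 < 2 * π`.
-/

theorem sixteen_mul_self_mul_centralBinom_sq_le (n : ℕ) :
    16 * (n * n.centralBinom ^ 2) ≤ (n + 1) * (n + 1).centralBinom ^ 2 := by
  refine Nat.le_of_mul_le_mul_left ?_ n.succ_pos
  calc
    (n + 1) * (16 * (n * n.centralBinom ^ 2))
        = 4 * (4 * n * (n + 1)) * n.centralBinom ^ 2 := by ring
    _ ≤ 4 * (2 * n + 1) ^ 2 * n.centralBinom ^ 2 := by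
      gcongr
      linarith
    _ = (2 * (2 * n + 1) * n.centralBinom) ^ 2 := by ring
    _ = ((n + 1) * (n + 1).centralBinom) ^ 2 := by rw [Nat.succ_mul_centralBinom_succ]
    _ = (n + 1) * ((n + 1) * (n + 1).centralBinom ^ 2) := by ring

theorem sixteen_pow_le_four_mul_self_mul_centralBinom_sq {n : ℕ} (hn : 0 < n) :
    16 ^ n ≤ 4 * (n * n.centralBinom ^ 2) := by
  induction n, hn using Nat.le_induction with
  | base => simp [Nat.centralBinom]
  | succ n _ ih =>
    calc
      16 ^ (n + 1) = 16 * 16 ^ n := pow_succ' 16 n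
      _ ≤ 16 * (4 * (n * n.centralBinom ^ 2)) := by gcongr
      _ = 4 * (16 * (n * n.centralBinom ^ 2)) := by ring
      _ ≤ 4 * ((n + 1) * (n + 1).centralBinom ^ 2) := by
        gcongr 4 * ?_
        exact sixteen_mul_self_mul_centralBinom_sq_le n

theorem four_pow_div_centralBinom_le_sqrt_four_mul {n : ℕ} (hn : 0 < n) :
    (4 : ℝ) ^ n / n.centralBinom ≤ √(4 * n) := by
  have hC : (0 : ℝ) < n.centralBinom := mod_cast n.centralBinom_pos
  refine Real.le_sqrt_of_sq_le ?_
  rw [div_pow, div_le_iff₀ (by positivity)]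
  calc
    ((4 : ℝ) ^ n) ^ 2 = 16 ^ n := by rw [pow_right_comm]; norm_num
    _ ≤ 4 * (n * n.centralBinom ^ 2) :=
      mod_cast sixteen_pow_le_four_mul_self_mul_centralBinom_sq hn
    _ = 4 * n * n.centralBinom ^ 2 := (mul_assoc _ _ _).symm

/-- `4ⁿ / C(2n,n) < √(2πn)` for every `n ≥ 1`:
the volume of the radial field is smaller than the volume of Pedersen's field. -/
theorem four_pow_div_centralBinom_lt_sqrt_two_pi_n (n : ℕ) (hn : 1 ≤ n) :
    (4 : ℝ) ^ n / ((2 * n).choose n : ℝ) < Real.sqrt (2 * Real.pi * n) := by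
  have : (0 : ℝ) < n := mod_cast hn
  calc
    (4 : ℝ) ^ n / ((2 * n).choose n : ℝ) ≤ √(4 * n) :=
      four_pow_div_centralBinom_le_sqrt_four_mul hn
    _ < √(2 * Real.pi * n) := by
      gcongr
      linarith [Real.pi_gt_three]
end
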